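/- Let ρ > 0 and 0 ≤ α < N. Let f : C_Ω^ρ → [0, ∞) be measurable and suppose there exist a subdomain Ω₀ of Ω with closure(Ω₀) ⊆ Ω, and constants c, β > 0 such that f(x) ≥ c·|x|^{−β} for all x ∈ C_{Ω₀}^ρ. If N < α + β, then there exists a constant C > 0 such that ∫_{C_Ω^ρ} f(y)|x−y|^{−α} dy ≥ C·|x|^{N−α−β} for all x ∈ C_Ω^{2ρ}. -/

import Mathlib

open MeasureTheory Real Set
open scoped ENNReal NNReal

noncomputable section

/-- Euclidean space `ℝ^N`. -/
abbrev Euc (N : ℕ) := EuclideanSpace ℝ (Fin N)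

/-- The Euclidean Laplacian `Δu(x) = ∑ ∂²u/∂xᵢ²(x)`, the trace of the Hessian. -/
def lap (N : ℕ) (u : Euc N → ℝ) (x : Euc N) : ℝ :=
  ∑ i : Fin N,
    iteratedFDeriv ℝ 2 u x ![EuclideanSpace.single i 1, EuclideanSpace.single i 1]

/-- The open cone `C_Ω^ρ = {x : |x| > ρ, x/|x| ∈ Ω}`. -/
def coneGT (N : ℕ) (ρ : ℝ) (Ω : Set (Euc N)) : Set (Euc N) :=
  {x | ρ < ‖x‖ ∧ ‖x‖⁻¹ • x ∈ Ω}

/-- The full open cone `C_Ω = {x ≠ 0 : x/|x| ∈ Ω}`. -/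
def cone (N : ℕ) (Ω : Set (Euc N)) : Set (Euc N) :=
  {x | x ≠ 0 ∧ ‖x‖⁻¹ • x ∈ Ω}

/-- `Ω` is a nonempty, connected, relatively open subset of the unit sphere `S^{N-1}`. -/
def IsConeDomain (N : ℕ) (Ω : Set (Euc N)) : Prop :=
  Ω ⊆ Metric.sphere (0 : Euc N) 1 ∧ IsConnected Ω ∧
    IsOpen {ω : Metric.sphere (0 : Euc N) 1 | (ω : Euc N) ∈ Ω}

/-- The convolution `(|x|^{-α} * f)(x) = ∫_{C_Ω^ρ} f(y)|x-y|^{-α} dy`, valued in `[0,∞]`. -/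
def rieszConv (N : ℕ) (α ρ : ℝ) (Ω : Set (Euc N)) (f : Euc N → ℝ) (x : Euc N) : ℝ≥0∞ :=
  ∫⁻ y in coneGT N ρ Ω, ENNReal.ofReal (f y * ‖x - y‖ ^ (-α))

/-- Dirichlet eigenpair hypothesis for `(Ω, λ₁, φ)`: `φ` is continuous on the closure of `Ω`,
positive on `Ω`, vanishing on the relative boundary, with maximum `1`, and its 0-homogeneous
extension `Φ(x) = φ(x/|x|)` is `C²` on the open cone and satisfies `ΔΦ = -λ₁|x|⁻²Φ`. -/
structure DirichletEigenpair (N : ℕ) (Ω : Set (Euc N)) (lam1 : ℝ) (φ : Euc N → ℝ) : Prop where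
  contOn : ContinuousOn φ (closure Ω)
  pos : ∀ ω ∈ Ω, 0 < φ ω
  bdryZero : ∀ ω ∈ closure Ω \ Ω, φ ω = 0
  le_one : ∀ ω ∈ closure Ω, φ ω ≤ 1
  max_one : ∃ ω ∈ closure Ω, φ ω = 1
  smoothExt : ContDiffOn ℝ 2 (fun x => φ (‖x‖⁻¹ • x)) (cone N Ω)
  eigen : ∀ x ∈ cone N Ω,
    lap N (fun y => φ (‖y‖⁻¹ • y)) x = -lam1 * ‖x‖ ^ (-(2:ℝ)) * φ (‖x‖⁻¹ • x)

/-- The Hardy constant `C_{H,Ω} = λ₁ + ((N-2)/2)²`. -/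
def CHconst (N : ℕ) (lam1 : ℝ) : ℝ := lam1 + (((N : ℝ) - 2) / 2) ^ 2

/-- The smaller root `γ_*` of `γ(γ + N - 2) = λ₁ - μ`. -/
def gammaStar (N : ℕ) (lam1 μ : ℝ) : ℝ :=
  (-((N : ℝ) - 2) - Real.sqrt (((N : ℝ) - 2) ^ 2 + 4 * (lam1 - μ))) / 2

/-- A positive (classical) solution of `(E) : -Δu - μ|x|⁻²u ≥ (|x|^{-α} * uᵖ) u^q` in `C_Ω^ρ`. -/
def IsPosSolE (N : ℕ) (ρ μ α p q : ℝ) (Ω : Set (Euc N)) (u : Euc N → ℝ) : Prop :=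
  ContDiffOn ℝ 2 u (coneGT N ρ Ω) ∧
  ContinuousOn u (closure (coneGT N ρ Ω)) ∧
  (∀ x ∈ coneGT N ρ Ω, 0 < u x) ∧
  (∀ x ∈ coneGT N ρ Ω, rieszConv N α ρ Ω (fun y => u y ^ p) x < ⊤) ∧
  (∀ x ∈ coneGT N ρ Ω,
    (rieszConv N α ρ Ω (fun y => u y ^ p) x).toReal * u x ^ q ≤
      -lap N u x - μ * ‖x‖ ^ (-(2:ℝ)) * u x)

/-- A positive solution of `(Z) : -Δu - μ|x|⁻²u ≥ (∫_{C_Ω^ρ} uᵖ) u^q` in `C_Ω^ρ`. -/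
def IsPosSolZ (N : ℕ) (ρ μ p q : ℝ) (Ω : Set (Euc N)) (u : Euc N → ℝ) : Prop :=
  ContDiffOn ℝ 2 u (coneGT N ρ Ω) ∧
  ContinuousOn u (closure (coneGT N ρ Ω)) ∧
  (∀ x ∈ coneGT N ρ Ω, 0 < u x) ∧
  (∫⁻ y in coneGT N ρ Ω, ENNReal.ofReal (u y ^ p)) < ⊤ ∧
  (∀ x ∈ coneGT N ρ Ω,
    (∫⁻ y in coneGT N ρ Ω, ENNReal.ofReal (u y ^ p)).toReal * u x ^ q ≤
      -lap N u x - μ * ‖x‖ ^ (-(2:ℝ)) * u x)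

/-- A positive solution `(u, v)` of the system `(S)` in `C_Ω^ρ`. -/
def IsPosSolS (N : ℕ) (ρ μ α p q s : ℝ) (Ω : Set (Euc N)) (u v : Euc N → ℝ) : Prop :=
  ContDiffOn ℝ 2 u (coneGT N ρ Ω) ∧ ContinuousOn u (closure (coneGT N ρ Ω)) ∧
  ContDiffOn ℝ 2 v (coneGT N ρ Ω) ∧ ContinuousOn v (closure (coneGT N ρ Ω)) ∧
  (∀ x ∈ coneGT N ρ Ω, 0 < u x) ∧ (∀ x ∈ coneGT N ρ Ω, 0 < v x) ∧
  (∀ x ∈ coneGT N ρ Ω, rieszConv N α ρ Ω (fun y => v y ^ p) x < ⊤) ∧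
  (∀ x ∈ coneGT N ρ Ω,
    (rieszConv N α ρ Ω (fun y => v y ^ p) x).toReal * v x ^ q ≤
      -lap N u x - μ * ‖x‖ ^ (-(2:ℝ)) * u x) ∧
  (∀ x ∈ coneGT N ρ Ω, u x ^ s ≤ -lap N v x - μ * ‖x‖ ^ (-(2:ℝ)) * v x)

open scoped Pointwise in
/-- Lemma 2.2(ii), case `N < α + β`: if `f ≥ c|x|^{-β}` on a subcone and
`N < α + β`, then the convolution is `≥ C|x|^{N-α-β}` on `C_Ω^{2ρ}`. -/
theorem conv_lower_bound_power
    (N : ℕ) (hN : 2 ≤ N) (Ω : Set (Euc N)) (hΩ : IsConeDomain N Ω)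
    (ρ α : ℝ) (hρ : 0 < ρ) (hα : 0 ≤ α) (hαN : α < N)
    (f : Euc N → ℝ) (hmeas : Measurable f) (hf0 : ∀ y, 0 ≤ f y)
    (Ω₀ : Set (Euc N)) (hΩ₀ : IsConeDomain N Ω₀) (hsub : closure Ω₀ ⊆ Ω)
    (c β : ℝ) (hc : 0 < c) (hβ : 0 < β)
    (hlow : ∀ x ∈ coneGT N ρ Ω₀, c * ‖x‖ ^ (-β) ≤ f x)
    (hNab : (N : ℝ) < α + β) :
    ∃ C > 0, ∀ x ∈ coneGT N (2 * ρ) Ω,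
      ENNReal.ofReal (C * ‖x‖ ^ ((N : ℝ) - α - β)) ≤
        ∫⁻ y in coneGT N ρ Ω, ENNReal.ofReal (f y * ‖x - y‖ ^ (-α)) := by
  obtain ⟨hS, hconn, hopen⟩ := hΩ₀
  obtain ⟨U, hU, hUeq⟩ := isOpen_induced_iff.mp hopen
  have hmemU : ∀ w ∈ Metric.sphere (0 : Euc N) 1, (w ∈ U ↔ w ∈ Ω₀) := by
    intro w hw
    have h := Set.ext_iff.mp hUeq ⟨w, hw⟩
    simpa using h
  have hunit : ∀ y : Euc N, 0 < ‖y‖ → ‖y‖⁻¹ • y ∈ Metric.sphere (0 : Euc N) 1 := by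
    intro y hy
    rw [mem_sphere_zero_iff_norm, norm_smul, norm_inv, norm_norm]
    exact inv_mul_cancel₀ hy.ne'
  let A : Set (Euc N) := {y | (1 < ‖y‖ ∧ ‖y‖ < 2) ∧ ‖y‖⁻¹ • y ∈ Ω₀}
  have hAopen : IsOpen A := by
    have h1 : IsOpen {y : Euc N | 1 < ‖y‖ ∧ ‖y‖ < 2} :=
      (isOpen_lt continuous_const continuous_norm).inter
        (isOpen_lt continuous_norm continuous_const)
    have h2 : ContinuousOn (fun y : Euc N => ‖y‖⁻¹ • y) {y : Euc N | 1 < ‖y‖ ∧ ‖y‖ < 2} := by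
      refine ContinuousOn.fun_smul ?_ continuousOn_id
      apply ContinuousOn.inv₀ continuous_norm.continuousOn
      intro y hy
      have := hy.1
      linarith
    have h3 := h2.isOpen_inter_preimage h1 hU
    convert h3 using 1
    ext y
    constructor
    · rintro ⟨h, h'⟩
      exact ⟨h, (hmemU _ (hS h')).mpr h'⟩
    · rintro ⟨h, h'⟩
      exact ⟨h, (hmemU _ (hunit y (by linarith [h.1]))).mp h'⟩
  have hAne : A.Nonempty := by
    obtain ⟨w, hw⟩ := hconn.nonempty
    have hw1 : ‖w‖ = 1 := mem_sphere_zero_iff_norm.mp (hS hw)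
    have hn : ‖(3 / 2 : ℝ) • w‖ = 3 / 2 := by
      rw [norm_smul, hw1]; norm_num
    refine ⟨(3 / 2 : ℝ) • w, ⟨?_, ?_⟩, ?_⟩
    · rw [hn]; norm_num
    · rw [hn]; norm_num
    · rw [hn, smul_smul]; norm_num; exact hw
  have hApos : 0 < volume A := hAopen.measure_pos volume hAne
  have hAfin : volume A ≠ ⊤ := by
    apply ne_of_lt
    refine lt_of_le_of_lt (measure_mono (t := Metric.ball (0 : Euc N) 2) ?_) measure_ball_lt_top
    intro y hy
    rw [mem_ball_zero_iff]
    exact hy.1.2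
  have hV : 0 < (volume A).toReal := ENNReal.toReal_pos hApos.ne' hAfin
  refine ⟨c * 2 ^ (-β) * 3 ^ (-α) * (volume A).toReal, by positivity, ?_⟩
  rintro x ⟨hx, -⟩
  set r := ‖x‖ with hr
  have hr0 : 0 < r := by linarith
  have hB : ∀ y ∈ r • A, r < ‖y‖ ∧ ‖y‖ < 2 * r ∧ ‖y‖⁻¹ • y ∈ Ω₀ := by
    rintro _ ⟨z, ⟨⟨hz1, hz2⟩, hz3⟩, rfl⟩
    have hn : ‖r • z‖ = r * ‖z‖ := by rw [norm_smul, Real.norm_of_nonneg hr0.le]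
    simp only [hn]
    refine ⟨by nlinarith, by nlinarith, ?_⟩
    rw [smul_smul]
    have : (r * ‖z‖)⁻¹ * r = ‖z‖⁻¹ := by field_simp
    rw [this]; exact hz3
  have hBopen : IsOpen (r • A) := hAopen.smul₀ hr0.ne'
  have hBsub : r • A ⊆ coneGT N ρ Ω := by
    intro y hy
    obtain ⟨h1, h2, h3⟩ := hB y hy
    exact ⟨by linarith, hsub (subset_closure h3)⟩
  calc ENNReal.ofReal (c * 2 ^ (-β) * 3 ^ (-α) * (volume A).toReal * r ^ ((N : ℝ) - α - β))
      = ENNReal.ofReal ((c * (2 * r) ^ (-β)) * (3 * r) ^ (-α)) * volume (r • A) := by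
        rw [Measure.addHaar_smul, finrank_euclideanSpace_fin, abs_of_pos (by positivity)]
        nth_rewrite 2 [← ENNReal.ofReal_toReal hAfin]
        rw [← ENNReal.ofReal_mul (by positivity), ← ENNReal.ofReal_mul (by positivity)]
        congr 1
        rw [Real.mul_rpow (by norm_num) hr0.le, Real.mul_rpow (by norm_num) hr0.le,
          show (N : ℝ) - α - β = (N : ℝ) + (-α) + (-β) by ring, Real.rpow_add hr0,
          Real.rpow_add hr0, Real.rpow_natCast]
        ring
    _ = ∫⁻ y in r • A, ENNReal.ofReal ((c * (2 * r) ^ (-β)) * (3 * r) ^ (-α)) := by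
        rw [setLIntegral_const]
    _ ≤ ∫⁻ y in r • A, ENNReal.ofReal (f y * ‖x - y‖ ^ (-α)) := by
        apply setLIntegral_mono' hBopen.measurableSet
        intro y hy
        obtain ⟨h1, h2, h3⟩ := hB y hy
        have hxy : 0 < ‖x - y‖ := by
          rw [norm_pos_iff, sub_ne_zero]
          rintro rfl
          exact lt_irrefl _ h1
        have hxy3 : ‖x - y‖ ≤ 3 * r := by
          have := norm_sub_le x y
          linarith
        apply ENNReal.ofReal_le_ofReal
        apply mul_le_mul _ _ (by positivity) (hf0 y)
        · refine le_trans ?_ (hlow y ⟨by linarith, h3⟩)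
          apply mul_le_mul_of_nonneg_left _ hc.le
          exact Real.rpow_le_rpow_of_nonpos (by linarith) h2.le (by linarith)
        · exact Real.rpow_le_rpow_of_nonpos hxy hxy3 (by linarith)
    _ ≤ ∫⁻ y in coneGT N ρ Ω, ENNReal.ofReal (f y * ‖x - y‖ ^ (-α)) :=
        lintegral_mono_set hBsub
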